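/- Let N and L be positive integers, let x : Fin N → Bool, and let i ∈ Fin N with x i = true. Let θ = π/(2L). Define the 2×2 real-rotation matrix R(θ) = [[cos θ, −sin θ],[sin θ, cos θ]] viewed as a complex matrix, define M_x as the diagonal matrix over the index set Fin 2 × Fin N whose diagonal entry at (c, j) is 1 if c = 0 or x j = false, and 0 otherwise, and let A = M_x · (R(θ) ⊗ I_N), where ⊗ is the Kronecker product and I_N is the N×N identity. Then A^L applied (by matrix–vector multiplication) to the standard basis vector e_{(0,i)} equals (cos θ)^L · e_{(0,i)}. -/

import Mathlib

/-!
The operator `U ⊗ 1` sends `|0, i⟩` to `U₀₀ |0, i⟩ + U₁₀ |1, i⟩`. The projection `M_x` fixes the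
first term and kills the second, since `x i = true`. Hence `|0, i⟩` is an eigenvector of
`M_x (U ⊗ 1)` with eigenvalue `U₀₀`.
-/

open Matrix
open scoped Kronecker

theorem pow_mulVec_of_mulVec_eq_smul {n S : Type*} [Fintype n] [DecidableEq n] [CommSemiring S]
    {A : Matrix n n S} {v : n → S} {μ : S} (h : A *ᵥ v = μ • v) (k : ℕ) :
    (A ^ k) *ᵥ v = μ ^ k • v := by
  induction k with
  | zero => rw [pow_zero, pow_zero, one_mulVec, one_smul]
  | succ k ih =>
    calc (A ^ (k + 1)) *ᵥ v
      _ = (A ^ k) *ᵥ (A *ᵥ v) := by rw [pow_succ, mulVec_mulVec]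
      _ = μ • μ ^ k • v := by rw [h, mulVec_smul, ih]
      _ = μ ^ (k + 1) • v := by rw [smul_smul, pow_succ']

theorem kronecker_one_mulVec_single {l m n S : Type*} [Fintype l] [DecidableEq l] [Fintype m]
    [DecidableEq m] [Fintype n] [DecidableEq n] [NonAssocSemiring S] (U : Matrix l m S)
    (c : m) (i : n) :
    (U ⊗ₖ (1 : Matrix n n S)) *ᵥ Pi.single (c, i) 1 =
      ∑ d, U d c • (Pi.single (d, i) 1 : l × n → S) := by
  ext ⟨d, j⟩
  simp [Pi.single_apply, one_apply, ite_and]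

section BombQuery

variable {ι S : Type*} [DecidableEq ι]

/-- The projection `M_x` of the controlled bomb query for the hidden string `x`. The first index is
the control bit; the vectors `|1, j⟩` with `x j = true`, on which the bomb explodes, are mapped to
zero. -/
def bombQuery [Zero S] [One S] (x : ι → Bool) : Matrix (Fin 2 × ι) (Fin 2 × ι) S :=
  diagonal fun p => if p.1 = 0 ∨ x p.2 = false then 1 else 0

variable [Fintype ι]

theorem bombQuery_mulVec_single_zero [NonAssocSemiring S] (x : ι → Bool) (i : ι) (a : S) :
    bombQuery x *ᵥ Pi.single (0, i) a = Pi.single (0, i) a := by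
  rw [bombQuery, diagonal_mulVec_single, if_pos (Or.inl rfl), one_mul]

theorem bombQuery_mulVec_single_one_of_eq_true [NonAssocSemiring S] {x : ι → Bool} {i : ι}
    (hx : x i = true) (a : S) :
    bombQuery x *ᵥ Pi.single (1, i) a = 0 := by
  rw [bombQuery, diagonal_mulVec_single, if_neg (by simp [hx]), zero_mul, Pi.single_zero]

variable [CommSemiring S]

theorem bombQuery_mul_kronecker_one_mulVec_single {x : ι → Bool} {i : ι} (hx : x i = true)
    (U : Matrix (Fin 2) (Fin 2) S) :
    (bombQuery x * (U ⊗ₖ (1 : Matrix ι ι S))) *ᵥ Pi.single (0, i) 1 =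
      U 0 0 • (Pi.single (0, i) 1 : Fin 2 × ι → S) := by
  calc (bombQuery x * (U ⊗ₖ (1 : Matrix ι ι S))) *ᵥ Pi.single (0, i) 1
    _ = bombQuery x *ᵥ (U 0 0 • Pi.single (0, i) 1 + U 1 0 • Pi.single (1, i) 1) := by
      rw [← mulVec_mulVec, kronecker_one_mulVec_single, Fin.sum_univ_two]
    _ = U 0 0 • Pi.single (0, i) 1 := by
      rw [mulVec_add, mulVec_smul, mulVec_smul, bombQuery_mulVec_single_zero,
        bombQuery_mulVec_single_one_of_eq_true hx, smul_zero, add_zero]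

theorem bomb_rotation_on_one_bit_general {x : ι → Bool} {i : ι} (hx : x i = true)
    (U : Matrix (Fin 2) (Fin 2) S) (k : ℕ) :
    ((bombQuery x * (U ⊗ₖ (1 : Matrix ι ι S))) ^ k) *ᵥ Pi.single (0, i) 1 =
      U 0 0 ^ k • (Pi.single (0, i) 1 : Fin 2 × ι → S) :=
  pow_mulVec_of_mulVec_eq_smul (bombQuery_mul_kronecker_one_mulVec_single hx U) k

end BombQuery

/-- Zeno effect with the bomb oracle on a one bit: if `x i = true`, then `L`
applications of `M_x ⬝ (R(θ) ⊗ I_N)` with `θ = π/(2L)` keep the control qubit at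
`|0⟩`, shrinking the amplitude: `|0, i⟩ ↦ (cos θ)^L |0, i⟩`. -/
theorem bomb_rotation_on_one_bit (N L : ℕ) (hN : 0 < N) (hL : 0 < L)
    (x : Fin N → Bool) (i : Fin N) (hx : x i = true) :
    let θ : ℝ := Real.pi / (2 * L)
    let R : Matrix (Fin 2) (Fin 2) ℂ :=
      !![(Real.cos θ : ℂ), -(Real.sin θ : ℂ); (Real.sin θ : ℂ), (Real.cos θ : ℂ)]
    let M : Matrix (Fin 2 × Fin N) (Fin 2 × Fin N) ℂ :=
      Matrix.diagonal fun p => if p.1 = 0 ∨ x p.2 = false then 1 else 0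
    let A : Matrix (Fin 2 × Fin N) (Fin 2 × Fin N) ℂ :=
      M * Matrix.kroneckerMap (· * ·) R (1 : Matrix (Fin N) (Fin N) ℂ)
    (A ^ L).mulVec (Pi.single ((0 : Fin 2), i) (1 : ℂ)) =
      ((Real.cos θ : ℂ) ^ L) •
        (Pi.single ((0 : Fin 2), i) (1 : ℂ) : Fin 2 × Fin N → ℂ) := by
  intro θ R _ _
  exact bomb_rotation_on_one_bit_general hx R L
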